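/- Let x ≥ 0 be a real number and let ξ be any integer-valued, square-integrable random variable on a probability space (Ω, F, P) with E[ξ] = x. Then E[(ξ − x)²] ≥ {x}(1 − {x}), where {x} = x − ⌊x⌋ is the fractional part of x. Consequently, the two-point random variable taking the values ⌊x⌋ and ⌊x⌋+1 with probabilities 1 − {x} and {x} has minimal variance among all integer-valued random variables with mean x. -/

import Mathlib

open MeasureTheory

/-- Minimal-variance property of the TBBA offspring law: any integer-valued
square-integrable random variable `ξ` with mean `x ≥ 0` satisfies
`E[(ξ - x)²] ≥ {x}(1 - {x})`, the variance of the two-point TBBA random variable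
taking values `⌊x⌋` and `⌊x⌋ + 1` with probabilities `1 - {x}` and `{x}`. -/
theorem tbba_minimal_variance
    {Ω : Type*} [MeasurableSpace Ω] (P : Measure Ω) [IsProbabilityMeasure P]
    (x : ℝ) (hx : 0 ≤ x) (ξ : Ω → ℤ) (hξ : Measurable ξ)
    (hL2 : MemLp (fun ω => (ξ ω : ℝ)) 2 P)
    (hmean : (∫ ω, (ξ ω : ℝ) ∂P) = x) :
    Int.fract x * (1 - Int.fract x) ≤ ∫ ω, ((ξ ω : ℝ) - x) ^ 2 ∂P := by
  have hint : Integrable (fun ω => (ξ ω : ℝ)) P := hL2.integrable (by norm_num)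
  have hy : Integrable (fun ω => (ξ ω : ℝ) - x) P := hint.sub (integrable_const x)
  have hsq : Integrable (fun ω => ((ξ ω : ℝ) - x) ^ 2) P :=
    (hL2.sub (memLp_const x)).integrable_sq
  have hy0 : ∫ ω, ((ξ ω : ℝ) - x) ∂P = 0 := by
    rw [integral_sub hint (integrable_const x), hmean]
    simp
  have hlin : Integrable (fun ω => (1 - 2 * Int.fract x) * ((ξ ω : ℝ) - x)) P :=
    hy.const_mul _
  have key : ∀ ω, Int.fract x * (1 - Int.fract x) + (1 - 2 * Int.fract x) * ((ξ ω : ℝ) - x)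
      ≤ ((ξ ω : ℝ) - x) ^ 2 := by
    intro ω
    have h : (0 : ℝ) ≤ ((ξ ω : ℝ) - ⌊x⌋) * ((ξ ω : ℝ) - ⌊x⌋ - 1) := by
      rcases le_or_gt (ξ ω) ⌊x⌋ with h | h
      · have h' : (ξ ω : ℝ) ≤ ⌊x⌋ := by exact_mod_cast h
        exact mul_nonneg_of_nonpos_of_nonpos (by linarith) (by linarith)
      · have h' : (⌊x⌋ : ℝ) + 1 ≤ ξ ω := by exact_mod_cast h
        exact mul_nonneg (by linarith) (by linarith)
    have hf : (⌊x⌋ : ℝ) = x - Int.fract x := by linarith [Int.floor_add_fract x]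
    rw [hf] at h
    nlinarith [h]
  have hmono := integral_mono ((integrable_const (Int.fract x * (1 - Int.fract x))).add hlin)
    hsq key
  have heq : ∫ ω, (Int.fract x * (1 - Int.fract x) + (1 - 2 * Int.fract x) * ((ξ ω : ℝ) - x)) ∂P
      = Int.fract x * (1 - Int.fract x) := by
    rw [integral_add (integrable_const _) hlin, integral_const_mul (1 - 2 * Int.fract x), hy0]
    simp
  exact heq.symm.le.trans hmono
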